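/- (Closed form for bumpered billiard tables B1(5,n), odd case.) For every odd n ≥ 3 and all signs e ∈ {1,-1}^(2n-2): BT_n(e₁,…,e_{2n-2}) = S(e₁,e₂,e₃,e₄)·∏_{m=1}^{(n-3)/2} Ñ(e_{4m+1},e_{4m+2},e_{4m+3},e_{4m+4}) + Σ_{i=0}^{(n-3)/2} H_{n-1-2i}(e₁,…,e_{2n-4-4i})·X(e_{2n-3-4i},e_{2n-2-4i})·∏_{m=1}^{i} Ñ(e_{2n-1-4i+4(m-1)},e_{2n-4i+4(m-1)},e_{2n+1-4i+4(m-1)},e_{2n+2-4i+4(m-1)}) + Σ_{i=0}^{(n-5)/2} H_{n-2-2i}(e₁,…,e_{2n-6-4i})·R̃(e_{2n-5-4i},e_{2n-4-4i},e_{2n-3-4i},e_{2n-2-4i})·∏_{m=1}^{i} Ñ(e_{2n-1-4i+4(m-1)},e_{2n-4i+4(m-1)},e_{2n+1-4i+4(m-1)},e_{2n+2-4i+4(m-1)}). -/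

import Mathlib

/-!
For odd `n ≥ 5` the recursion `BT_n = H_{n-1}·X + H_{n-2}·R̃ + BT_{n-2}·Ñ` is, in the variable
`k = (n - 3) / 2`, a first-order inhomogeneous linear recurrence. Its solution is the initial value
`BT_3 = H_2·X + S` times the product of all the `Ñ`, plus each inhomogeneous term times the product
of the later `Ñ`. The part `H_2·X` of the initial value is the `i = k` summand of the sum over `X`,
which therefore has one term more than the sum over `R̃`.
-/

open LaurentPolynomial Finset

noncomputable section

/-- The ring `ℤ[A, A⁻¹]` of Laurent polynomials over `ℤ`; the variable `A` is
`LaurentPolynomial.T 1`, and `A^n = T n` for `n : ℤ`. -/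
abbrev KR : Type := LaurentPolynomial ℤ

/-- `a ε = A^ε`. -/
def Ca (ε : ℤ) : KR := T ε

/-- `f₂ ε = -A^(-3ε)`. -/
def Cf₂ (ε : ℤ) : KR := -T (-3 * ε)

/-- `δ = -A² - A⁻²`. -/
def Cδ : KR := -T 2 - T (-2)

/-- `X(α,β) = δ·a(α)a(β) + a(α)a(-β) + a(-α)a(β)`. -/
def CX (α β : ℤ) : KR := Cδ * Ca α * Ca β + Ca α * Ca (-β) + Ca (-α) * Ca β

/-- `g₂(α,β) = X(α,β) + δ·a(-α)a(-β)`, the Kauffman bracket of `T(4,2)`. -/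
def Cg₂ (α β : ℤ) : KR := CX α β + Cδ * Ca (-α) * Ca (-β)

/-- `K(α,β,γ,η) = f₂(-α)f₂(-β)a(-γ)a(-η)`. -/
def CK (α β γ η : ℤ) : KR := Cf₂ (-α) * Cf₂ (-β) * Ca (-γ) * Ca (-η)

/-- `N(α,β,γ,η) = f₂(-α)a(-β)a(-γ)a(-η)`. -/
def CN (α β γ η : ℤ) : KR := Cf₂ (-α) * Ca (-β) * Ca (-γ) * Ca (-η)

/-- `Ñ(α,β,γ,η) = a(-α)f₂(-β)a(-γ)a(-η)`. -/
def CNt (α β γ η : ℤ) : KR := Ca (-α) * Cf₂ (-β) * Ca (-γ) * Ca (-η)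

/-- `R(α,β,γ,η) = f₂(-α)a(β)a(-γ)a(-η)`. -/
def CR (α β γ η : ℤ) : KR := Cf₂ (-α) * Ca β * Ca (-γ) * Ca (-η)

/-- `R̃(α,β,γ,η) = a(α)f₂(-β)a(-γ)a(-η)`. -/
def CRt (α β γ η : ℤ) : KR := Ca α * Cf₂ (-β) * Ca (-γ) * Ca (-η)

/-- `S(α,β,γ,η) = f₂(α)f₂(-β)a(-γ)a(-η)`. -/
def CS (α β γ η : ℤ) : KR := Cf₂ α * Cf₂ (-β) * Ca (-γ) * Ca (-η)

/-- `L(α,β,γ) = f₂(-α)a(β)a(-γ)`. -/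
def CL (α β γ : ℤ) : KR := Cf₂ (-α) * Ca β * Ca (-γ)

/-- `M(α,β,γ) = f₂(-α)f₂(β)a(-γ)`. -/
def CM (α β γ : ℤ) : KR := Cf₂ (-α) * Cf₂ β * Ca (-γ)

mutual
  /-- `H n e` is the Kauffman bracket of the Chebyshev billiard table diagram `T(5,n)`
  with crossing signs `e 1, …, e (2n-2)`. -/
  def Hb : ℕ → (ℕ → ℤ) → KR
    | 0, _ => 1
    | 1, _ => 1
    | 2, e =>
        Ca (e 1) * Ca (e 2) + Cδ * Ca (e 1) * Ca (-e 2) + Cδ * Ca (-e 1) * Ca (e 2)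
          + Cδ ^ 2 * Ca (-e 1) * Ca (-e 2)
    | m + 3, e =>
        Hb (m + 2) e * Ca (e (2 * m + 3)) * Ca (e (2 * m + 4))
          + Hb (m + 1) e * CK (e (2 * m + 1)) (e (2 * m + 2)) (e (2 * m + 3)) (e (2 * m + 4))
          + if (m + 3) % 2 = 1 then
              BTb (m + 2) e * Ca (e (2 * m + 3)) * Ca (-e (2 * m + 4))
                + Bb (m + 2) (Function.update e (2 * m + 1) (e (2 * m + 2)))
                    * Cf₂ (-e (2 * m + 1)) * Ca (-e (2 * m + 3)) * Ca (e (2 * m + 4))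
            else
              BTb (m + 2) e * Ca (-e (2 * m + 3)) * Ca (e (2 * m + 4))
                + Bb (m + 2) e * Cf₂ (-e (2 * m + 2)) * Ca (e (2 * m + 3)) * Ca (-e (2 * m + 4))
  termination_by n _ => n

  /-- `B n e` is the Kauffman bracket of the bumpered billiard table `B2(5,n)` with
  crossing signs `e 1, …, e (2n-3)`. -/
  def Bb : ℕ → (ℕ → ℤ) → KR
    | 0, _ => 1
    | 1, _ => 1
    | 2, e => Cf₂ (e 1)
    | m + 3, e =>
        Hb (m + 2) e * Ca (e (2 * m + 3))
          + if (m + 3) % 2 = 1 then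
              Bb (m + 2) (Function.update e (2 * m + 1) (e (2 * m + 2)))
                * Cf₂ (-e (2 * m + 1)) * Ca (-e (2 * m + 3))
            else
              Bb (m + 2) e * Cf₂ (-e (2 * m + 2)) * Ca (-e (2 * m + 3))
  termination_by n _ => n

  /-- `BT n e` is the Kauffman bracket of the bumpered billiard table `B1(5,n)` with its
  crossingless tangle closure, with crossing signs `e 1, …, e (2n-2)`. -/
  def BTb : ℕ → (ℕ → ℤ) → KR
    | 0, _ => 1
    | 1, _ => 1
    | 2, e => Cg₂ (e 1) (e 2)
    | 3, e => Hb 2 e * CX (e 3) (e 4) + CS (e 1) (e 2) (e 3) (e 4)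
    | 4, e =>
        Hb 3 e * CX (e 5) (e 6) + Hb 2 e * CR (e 3) (e 4) (e 5) (e 6)
          + Cg₂ (e 1) (e 2) * CN (e 3) (e 4) (e 5) (e 6)
    | m + 5, e =>
        Hb (m + 4) e * CX (e (2 * m + 7)) (e (2 * m + 8))
          + if (m + 5) % 2 = 1 then
              Hb (m + 3) e * CRt (e (2 * m + 5)) (e (2 * m + 6)) (e (2 * m + 7)) (e (2 * m + 8))
                + BTb (m + 3) e * CNt (e (2 * m + 5)) (e (2 * m + 6)) (e (2 * m + 7)) (e (2 * m + 8))
            else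
              Hb (m + 3) e * CR (e (2 * m + 5)) (e (2 * m + 6)) (e (2 * m + 7)) (e (2 * m + 8))
                + BTb (m + 3) e * CN (e (2 * m + 5)) (e (2 * m + 6)) (e (2 * m + 7)) (e (2 * m + 8))
  termination_by n _ => n
end

lemma eq_mul_prod_add_sum_of_linear_recurrence {M : Type*} [CommSemiring M] {u b c : ℕ → M}
    (h : ∀ j, u (j + 1) = b (j + 1) + u j * c j) (k : ℕ) :
    u k = u 0 * ∏ m ∈ range k, c m
      + ∑ i ∈ range k, b (k - i) * ∏ m ∈ range i, c (k - i + m) := by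
  induction k with
  | zero => simp
  | succ k ih =>
    have shift : ∀ i ∈ range k,
        b (k + 1 - (i + 1)) * ∏ m ∈ range (i + 1), c (k + 1 - (i + 1) + m) =
          b (k - i) * (∏ m ∈ range i, c (k - i + m)) * c k := fun i hi => by
      have hik : i < k := mem_range.mp hi
      rw [Nat.add_sub_add_right, prod_range_succ, Nat.sub_add_cancel hik.le, mul_assoc]
    calc u (k + 1) = b (k + 1) + u k * c k := h k
      _ = u 0 * ((∏ m ∈ range k, c m) * c k)
            + ((∑ i ∈ range k, b (k - i) * ∏ m ∈ range i, c (k - i + m)) * c k + b (k + 1)) := by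
        rw [ih]; ring
      _ = _ := by
        rw [prod_range_succ, sum_range_succ', sum_congr rfl shift, ← sum_mul]
        simp

/-- The summand `H_{n-1}·X` of `BT_n`, for `n = 2j + 3`. -/
def BTbTermX (e : ℕ → ℤ) (j : ℕ) : KR :=
  Hb (2 * j + 2) e * CX (e (4 * j + 3)) (e (4 * j + 4))

/-- The summand `H_{n-2}·R̃` of `BT_n`, for `n = 2j + 3`; it is present only for `j ≥ 1`. -/
def BTbTermRt (e : ℕ → ℤ) (j : ℕ) : KR :=
  Hb (2 * j + 1) e * CRt (e (4 * j + 1)) (e (4 * j + 2)) (e (4 * j + 3)) (e (4 * j + 4))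

/-- The coefficient `Ñ` of `BT_n` in the recursion for `BT_{n+2}`, for `n = 2j + 3`. -/
def BTbFactorNt (e : ℕ → ℤ) (j : ℕ) : KR :=
  CNt (e (4 * j + 5)) (e (4 * j + 6)) (e (4 * j + 7)) (e (4 * j + 8))

lemma BTb_three (e : ℕ → ℤ) : BTb 3 e = BTbTermX e 0 + CS (e 1) (e 2) (e 3) (e 4) := by
  rw [BTb, BTbTermX]

lemma BTb_two_mul_succ_add_three (e : ℕ → ℤ) (k : ℕ) :
    BTb (2 * (k + 1) + 3) e =
      BTbTermX e (k + 1) + BTbTermRt e (k + 1) + BTb (2 * k + 3) e * BTbFactorNt e k := by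
  have odd : (2 * k + 5) % 2 = 1 := by omega
  rw [show 2 * (k + 1) + 3 = 2 * k + 5 by ring, BTb, if_pos odd, ← add_assoc,
    show 2 * (2 * k) = 4 * k by ring]
  rfl

lemma BTb_two_mul_add_three (e : ℕ → ℤ) (k : ℕ) :
    BTb (2 * k + 3) e =
      CS (e 1) (e 2) (e 3) (e 4) * ∏ m ∈ range k, BTbFactorNt e m
        + ∑ i ∈ range (k + 1), BTbTermX e (k - i) * ∏ m ∈ range i, BTbFactorNt e (k - i + m)
        + ∑ i ∈ range k, BTbTermRt e (k - i) * ∏ m ∈ range i, BTbFactorNt e (k - i + m) := by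
  have unrolled : BTb (2 * k + 3) e = BTb 3 e * ∏ m ∈ range k, BTbFactorNt e m
      + ∑ i ∈ range k, (BTbTermX e (k - i) + BTbTermRt e (k - i)) *
          ∏ m ∈ range i, BTbFactorNt e (k - i + m) :=
    eq_mul_prod_add_sum_of_linear_recurrence (u := fun j => BTb (2 * j + 3) e)
      (b := fun j => BTbTermX e j + BTbTermRt e j) (BTb_two_mul_succ_add_three e) k
  simp only [unrolled, BTb_three, add_mul, sum_add_distrib, sum_range_succ _ k, Nat.sub_self,
    zero_add]
  ring

lemma BTbTermX_sub {k i : ℕ} (hi : i ≤ k) (e : ℕ → ℤ) :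
    BTbTermX e (k - i) =
      Hb (2 * k + 3 - 1 - 2 * i) e *
        CX (e (2 * (2 * k + 3) - 3 - 4 * i)) (e (2 * (2 * k + 3) - 2 - 4 * i)) := by
  rw [BTbTermX, show 2 * (k - i) + 2 = 2 * k + 3 - 1 - 2 * i by omega,
    show 4 * (k - i) + 3 = 2 * (2 * k + 3) - 3 - 4 * i by omega,
    show 4 * (k - i) + 4 = 2 * (2 * k + 3) - 2 - 4 * i by omega]

lemma BTbTermRt_sub {k i : ℕ} (hi : i ≤ k) (e : ℕ → ℤ) :
    BTbTermRt e (k - i) =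
      Hb (2 * k + 3 - 2 - 2 * i) e *
        CRt (e (2 * (2 * k + 3) - 5 - 4 * i)) (e (2 * (2 * k + 3) - 4 - 4 * i))
          (e (2 * (2 * k + 3) - 3 - 4 * i)) (e (2 * (2 * k + 3) - 2 - 4 * i)) := by
  rw [BTbTermRt, show 2 * (k - i) + 1 = 2 * k + 3 - 2 - 2 * i by omega,
    show 4 * (k - i) + 1 = 2 * (2 * k + 3) - 5 - 4 * i by omega,
    show 4 * (k - i) + 2 = 2 * (2 * k + 3) - 4 - 4 * i by omega,
    show 4 * (k - i) + 3 = 2 * (2 * k + 3) - 3 - 4 * i by omega,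
    show 4 * (k - i) + 4 = 2 * (2 * k + 3) - 2 - 4 * i by omega]

lemma BTbFactorNt_sub_add {k i : ℕ} (hi : i ≤ k) (m : ℕ) (e : ℕ → ℤ) :
    BTbFactorNt e (k - i + m) =
      CNt (e (2 * (2 * k + 3) - 1 - 4 * i + 4 * m)) (e (2 * (2 * k + 3) - 4 * i + 4 * m))
        (e (2 * (2 * k + 3) + 1 - 4 * i + 4 * m)) (e (2 * (2 * k + 3) + 2 - 4 * i + 4 * m)) := by
  rw [BTbFactorNt]
  congr 2 <;> omega

theorem bumpered_B1_closed_form_odd_general (n : ℕ) (hn : 3 ≤ n) (hodd : n % 2 = 1)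
    (e : ℕ → ℤ) :
    BTb n e =
      CS (e 1) (e 2) (e 3) (e 4) *
          ∏ m ∈ Finset.range ((n - 3) / 2),
            CNt (e (4 * m + 5)) (e (4 * m + 6)) (e (4 * m + 7)) (e (4 * m + 8))
        + (∑ i ∈ Finset.range ((n - 3) / 2 + 1),
            Hb (n - 1 - 2 * i) e * CX (e (2 * n - 3 - 4 * i)) (e (2 * n - 2 - 4 * i)) *
              ∏ m ∈ Finset.range i,
                CNt (e (2 * n - 1 - 4 * i + 4 * m)) (e (2 * n - 4 * i + 4 * m))
                  (e (2 * n + 1 - 4 * i + 4 * m)) (e (2 * n + 2 - 4 * i + 4 * m)))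
        + ∑ i ∈ Finset.range ((n - 3) / 2),
            Hb (n - 2 - 2 * i) e *
                CRt (e (2 * n - 5 - 4 * i)) (e (2 * n - 4 - 4 * i)) (e (2 * n - 3 - 4 * i))
                  (e (2 * n - 2 - 4 * i)) *
              ∏ m ∈ Finset.range i,
                CNt (e (2 * n - 1 - 4 * i + 4 * m)) (e (2 * n - 4 * i + 4 * m))
                  (e (2 * n + 1 - 4 * i + 4 * m)) (e (2 * n + 2 - 4 * i + 4 * m)) := by
  obtain ⟨k, rfl⟩ : ∃ k, n = 2 * k + 3 := ⟨(n - 3) / 2, by omega⟩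
  rw [show (2 * k + 3 - 3) / 2 = k by omega, BTb_two_mul_add_three]
  refine congrArg₂ (· + ·) (congrArg (_ + ·) (sum_congr rfl fun i hi => ?_))
    (sum_congr rfl fun i hi => ?_)
  · have hik : i ≤ k := Nat.lt_succ_iff.mp (mem_range.mp hi)
    simp only [BTbTermX_sub hik, BTbFactorNt_sub_add hik]
  · have hik : i ≤ k := (mem_range.mp hi).le
    simp only [BTbTermRt_sub hik, BTbFactorNt_sub_add hik]

/-- Closed form for the Kauffman bracket of the bumpered billiard tables `B1(5,n)`,
odd case. -/
theorem bumpered_B1_closed_form_odd (n : ℕ) (hn : 3 ≤ n) (hodd : n % 2 = 1)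
    (e : ℕ → ℤ) (he : ∀ i, e i = 1 ∨ e i = -1) :
    BTb n e =
      CS (e 1) (e 2) (e 3) (e 4) *
          ∏ m ∈ Finset.range ((n - 3) / 2),
            CNt (e (4 * m + 5)) (e (4 * m + 6)) (e (4 * m + 7)) (e (4 * m + 8))
        + (∑ i ∈ Finset.range ((n - 3) / 2 + 1),
            Hb (n - 1 - 2 * i) e * CX (e (2 * n - 3 - 4 * i)) (e (2 * n - 2 - 4 * i)) *
              ∏ m ∈ Finset.range i,
                CNt (e (2 * n - 1 - 4 * i + 4 * m)) (e (2 * n - 4 * i + 4 * m))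
                  (e (2 * n + 1 - 4 * i + 4 * m)) (e (2 * n + 2 - 4 * i + 4 * m)))
        + ∑ i ∈ Finset.range ((n - 3) / 2),
            Hb (n - 2 - 2 * i) e *
                CRt (e (2 * n - 5 - 4 * i)) (e (2 * n - 4 - 4 * i)) (e (2 * n - 3 - 4 * i))
                  (e (2 * n - 2 - 4 * i)) *
              ∏ m ∈ Finset.range i,
                CNt (e (2 * n - 1 - 4 * i + 4 * m)) (e (2 * n - 4 * i + 4 * m))
                  (e (2 * n + 1 - 4 * i + 4 * m)) (e (2 * n + 2 - 4 * i + 4 * m)) := by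
  exact bumpered_B1_closed_form_odd_general n hn hodd e

end
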